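/- Let E be a real Banach space, T > 0, and S : ℝ → E →L[ℝ] E a strongly continuous semigroup on [0,T]: S 0 = 1, S (s+t) = S s ∘L S t for s,t ≥ 0 with s+t ≤ T, the map s ↦ S s x is continuous on [0,T] for every x ∈ E, and there is M with ‖S s‖ ≤ M for all s ∈ [0,T]. Let u₀ ∈ E, let u, N : [0,T] → E be continuous, and suppose that for every t ∈ [0,T] one has u(t) = S t u₀ + ∫₀^t S s (N(t−s)) ds. Then for every μ ∈ ℝ and every t ∈ [0,T] one has u(t) = e^{−μt}·S t u₀ + ∫₀^t e^{−μs} · S s (N(t−s) + μ·u(t−s)) ds. -/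

import Mathlib

/-!
Write `f r = S r (N (t - r))`. Applying `S s` to the Duhamel formula at time `t - s`, the semigroup
law gives `S s (u (t - s)) = S t u₀ + ∫ r in s..t, f r`: this function of `s` equals `u t` at
`s = 0` and `S t u₀` at `s = t`, and its derivative is `-f`. Integrating by parts against a weight
`φ` exchanges the value at `0` for the value at `t`, at the cost of an extra integrand
`-φ' s • S s (u (t - s))`. For `φ s = exp (-(μ * s))` one has `-φ' = μ * φ`, which is the added
linear term.
-/

open MeasureTheory Set

theorem continuousOn_clm_apply_of_norm_le {X 𝕜 E F : Type*} [TopologicalSpace X]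
    [NontriviallyNormedField 𝕜] [SeminormedAddCommGroup E] [NormedSpace 𝕜 E]
    [SeminormedAddCommGroup F] [NormedSpace 𝕜 F] {S : X → E →L[𝕜] F} {K : Set X} {M : ℝ}
    (hS : ∀ x, ContinuousOn (fun s => S s x) K) (hM : ∀ s ∈ K, ‖S s‖ ≤ M)
    {g : X → E} (hg : ContinuousOn g K) : ContinuousOn (fun s => S s (g s)) K := by
  have hlip : ∀ s ∈ K, LipschitzOnWith M.toNNReal (S s) univ := fun s hs =>
    ((S s).lipschitz.weaken (NNReal.le_toNNReal_of_coe_le (hM s hs))).lipschitzOnWith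
  have hjoint : ContinuousOn (fun p : X × E => S p.1 p.2) (K ×ˢ univ) :=
    continuousOn_prod_of_continuousOn_lipschitzOnWith' _ M.toNNReal hlip fun x _ => hS x
  exact hjoint.comp (continuousOn_id.prodMk hg) fun s hs => ⟨hs, mem_univ _⟩

theorem smul_add_integral_eq_add_integral_smul_sub {𝕜 E : Type*} [NontriviallyNormedField 𝕜]
    [NormedAlgebra ℝ 𝕜] [NormedAddCommGroup E] [NormedSpace ℝ E] [NormedSpace 𝕜 E]
    [IsScalarTower ℝ 𝕜 E] [CompleteSpace E] {a b : ℝ} {f : ℝ → E}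
    (hf : ContinuousOn f (uIcc a b)) {φ φ' : ℝ → 𝕜} (hφ : ContinuousOn φ (uIcc a b))
    (hφ' : ∀ s ∈ Ioo (min a b) (max a b), HasDerivAt φ (φ' s) s)
    (hφ'_int : IntervalIntegrable φ' volume a b) (c : E) :
    φ a • (c + ∫ r in a..b, f r) =
      φ b • c + ∫ s in a..b, (φ s • f s - φ' s • (c + ∫ r in s..b, f r)) := by
  have htail_cont : ContinuousOn (fun s => c + ∫ r in s..b, f r) (uIcc a b) :=
    continuousOn_const.add (intervalIntegral.continuousOn_primitive_interval_left
      (hf.integrableOn_compact isCompact_uIcc))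
  have htail_deriv : ∀ s ∈ Ioo (min a b) (max a b),
      HasDerivAt (fun s => c + ∫ r in s..b, f r) (-f s) s := fun s hs =>
    (intervalIntegral.integral_hasDerivAt_left
      ((hf.mono (uIcc_subset_uIcc_right (Ioo_subset_Icc_self hs))).intervalIntegrable)
      ((hf.mono Ioo_subset_Icc_self).stronglyMeasurableAtFilter isOpen_Ioo s hs)
      (hf.continuousAt (Icc_mem_nhds hs.1 hs.2))).const_add c
  have hparts := intervalIntegral.integral_smul_deriv_eq_deriv_smul_of_hasDerivAt hφ htail_cont
    hφ' htail_deriv hφ'_int hf.neg.intervalIntegrable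
  simp only [smul_neg, intervalIntegral.integral_neg, intervalIntegral.integral_same,
    add_zero] at hparts
  have hφf_int : IntervalIntegrable (fun s => φ s • f s) volume a b :=
    (hφ.smul hf).intervalIntegrable
  rw [intervalIntegral.integral_sub hφf_int (hφ'_int.smul_continuousOn htail_cont),
    ← neg_neg (∫ s in a..b, φ s • f s), hparts]
  abel

section Duhamel

variable {E : Type*} [NormedAddCommGroup E] [NormedSpace ℝ E] {T : ℝ} {S : ℝ → E →L[ℝ] E}
  {N : ℝ → E}

theorem continuousOn_duhamel_integrand {M : ℝ}
    (hScont : ∀ x : E, ContinuousOn (fun s => S s x) (Icc 0 T))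
    (hM : ∀ s ∈ Icc 0 T, ‖S s‖ ≤ M) (hN : ContinuousOn N (Icc 0 T)) {t : ℝ} (ht : t ≤ T) :
    ContinuousOn (fun s => S s (N (t - s))) (Icc 0 t) := by
  have hsub : Icc 0 t ⊆ Icc 0 T := Icc_subset_Icc_right ht
  have hreflect : MapsTo (fun s => t - s) (Icc 0 t) (Icc 0 T) := fun s hs =>
    ⟨sub_nonneg.2 hs.2, (sub_le_self t hs.1).trans ht⟩
  exact continuousOn_clm_apply_of_norm_le (fun x => (hScont x).mono hsub)
    (fun s hs => hM s (hsub hs)) (hN.comp (by fun_prop) hreflect)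

variable [CompleteSpace E]

theorem semigroup_apply_duhamel_integral
    (hSadd : ∀ s t : ℝ, 0 ≤ s → 0 ≤ t → s + t ≤ T → S (s + t) = (S s).comp (S t))
    {s t : ℝ} (hs : s ∈ Icc 0 t) (ht : t ≤ T)
    (hint : IntervalIntegrable (fun r => S r (N (t - s - r))) volume 0 (t - s)) :
    S s (∫ r in (0 : ℝ)..(t - s), S r (N (t - s - r))) = ∫ r in s..t, S r (N (t - r)) := by
  have hts : 0 ≤ t - s := sub_nonneg.2 hs.2
  calc S s (∫ r in (0 : ℝ)..(t - s), S r (N (t - s - r)))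
      = ∫ r in (0 : ℝ)..(t - s), S s (S r (N (t - s - r))) :=
        ((S s).intervalIntegral_comp_comm hint).symm
    _ = ∫ r in (0 : ℝ)..(t - s), S (s + r) (N (t - (s + r))) := by
        refine intervalIntegral.integral_congr fun r hr => ?_
        rw [uIcc_of_le hts] at hr
        simp only [hSadd s r hs.1 hr.1 (by linarith [hr.2]), ContinuousLinearMap.comp_apply,
          sub_sub]
    _ = ∫ r in s..t, S r (N (t - r)) := by
        rw [intervalIntegral.integral_comp_add_left (fun r => S r (N (t - r))), add_zero,
          add_sub_cancel]

theorem semigroup_apply_duhamel_solution {M : ℝ}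
    (hSadd : ∀ s t : ℝ, 0 ≤ s → 0 ≤ t → s + t ≤ T → S (s + t) = (S s).comp (S t))
    (hScont : ∀ x : E, ContinuousOn (fun s => S s x) (Icc 0 T))
    (hM : ∀ s ∈ Icc 0 T, ‖S s‖ ≤ M) (hN : ContinuousOn N (Icc 0 T)) {u₀ : E} {u : ℝ → E}
    (hrep : ∀ t ∈ Icc 0 T, u t = S t u₀ + ∫ s in (0 : ℝ)..t, S s (N (t - s)))
    {s t : ℝ} (hs : s ∈ Icc 0 t) (ht : t ≤ T) :
    S s (u (t - s)) = S t u₀ + ∫ r in s..t, S r (N (t - r)) := by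
  have hts : 0 ≤ t - s := sub_nonneg.2 hs.2
  have htsT : t - s ≤ T := (sub_le_self t hs.1).trans ht
  have hint : IntervalIntegrable (fun r => S r (N (t - s - r))) volume 0 (t - s) :=
    (continuousOn_duhamel_integrand hScont hM hN htsT).intervalIntegrable_of_Icc hts
  have hfree : S s (S (t - s) u₀) = S t u₀ := by
    rw [← ContinuousLinearMap.comp_apply, ← hSadd s (t - s) hs.1 hts (by linarith),
      add_sub_cancel]
  rw [hrep (t - s) ⟨hts, htsT⟩, map_add, hfree,
    semigroup_apply_duhamel_integral hSadd hs ht hint]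

theorem duhamel_add_subtract_linear_term_general {𝕜 : Type*} [NontriviallyNormedField 𝕜]
    [NormedAlgebra ℝ 𝕜] [NormedSpace 𝕜 E] [IsScalarTower ℝ 𝕜 E] {M : ℝ}
    (hSadd : ∀ s t : ℝ, 0 ≤ s → 0 ≤ t → s + t ≤ T → S (s + t) = (S s).comp (S t))
    (hScont : ∀ x : E, ContinuousOn (fun s => S s x) (Icc 0 T))
    (hM : ∀ s ∈ Icc 0 T, ‖S s‖ ≤ M) (hN : ContinuousOn N (Icc 0 T)) {u₀ : E} {u : ℝ → E}
    (hrep : ∀ t ∈ Icc 0 T, u t = S t u₀ + ∫ s in (0 : ℝ)..t, S s (N (t - s)))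
    {t : ℝ} (ht : t ∈ Icc 0 T) {φ φ' : ℝ → 𝕜} (hφ : ContinuousOn φ (Icc 0 t))
    (hφ' : ∀ s ∈ Ioo 0 t, HasDerivAt φ (φ' s) s) (hφ'_int : IntervalIntegrable φ' volume 0 t) :
    φ 0 • u t = φ t • S t u₀ +
      ∫ s in (0 : ℝ)..t, (φ s • S s (N (t - s)) - φ' s • S s (u (t - s))) := by
  have huIcc : uIcc 0 t = Icc 0 t := uIcc_of_le ht.1
  have hf := continuousOn_duhamel_integrand hScont hM hN ht.2
  rw [hrep t ht, smul_add_integral_eq_add_integral_smul_sub (huIcc ▸ hf) (huIcc ▸ hφ)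
    (by simpa only [min_eq_left ht.1, max_eq_right ht.1] using hφ') hφ'_int]
  congr 1
  refine intervalIntegral.integral_congr fun s hs => ?_
  rw [huIcc] at hs
  simp only [semigroup_apply_duhamel_solution hSadd hScont hM hN hrep hs ht.2]

end Duhamel

/-- The 'add and subtract a linear term' procedure: a mild (Duhamel) solution
`u(t) = S_t u₀ + ∫₀ᵗ S_s N(t-s) ds` also satisfies, for every `μ`,
`u(t) = e^{-μt} S_t u₀ + ∫₀ᵗ e^{-μs} S_s (N(t-s) + μ u(t-s)) ds`. -/
theorem duhamel_add_subtract_linear_term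
    {E : Type*} [NormedAddCommGroup E] [NormedSpace ℝ E] [CompleteSpace E]
    (T : ℝ) (hT : 0 < T) (S : ℝ → E →L[ℝ] E)
    (hS0 : S 0 = 1)
    (hSadd : ∀ s t : ℝ, 0 ≤ s → 0 ≤ t → s + t ≤ T → S (s + t) = (S s).comp (S t))
    (hScont : ∀ x : E, ContinuousOn (fun s => S s x) (Set.Icc 0 T))
    (M : ℝ) (hM : ∀ s ∈ Set.Icc (0 : ℝ) T, ‖S s‖ ≤ M)
    (u₀ : E) (u N : ℝ → E)
    (hu : ContinuousOn u (Set.Icc 0 T)) (hN : ContinuousOn N (Set.Icc 0 T))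
    (hrep : ∀ t ∈ Set.Icc (0 : ℝ) T,
      u t = S t u₀ + ∫ s in (0 : ℝ)..t, S s (N (t - s))) :
    ∀ (μ : ℝ), ∀ t ∈ Set.Icc (0 : ℝ) T,
      u t = Real.exp (-(μ * t)) • S t u₀
        + ∫ s in (0 : ℝ)..t,
            Real.exp (-(μ * s)) • S s (N (t - s) + μ • u (t - s)) := by
  intro μ t ht
  have hexp (s : ℝ) : HasDerivAt (fun s => Real.exp (-(μ * s))) (-(μ * Real.exp (-(μ * s)))) s := by
    simpa only [neg_neg] using (ProbabilityTheory.hasDerivAt_neg_exp_mul_exp (r := μ)).fun_neg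
  have hexp'_int : IntervalIntegrable (fun s => -(μ * Real.exp (-(μ * s)))) volume 0 t :=
    Continuous.intervalIntegrable (by fun_prop) 0 t
  simpa [mul_smul, smul_comm μ] using
    duhamel_add_subtract_linear_term_general hSadd hScont hM hN hrep ht (by fun_prop)
      (fun s _ => hexp s) hexp'_int
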